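/- arXiv:2306.10333 — 3 statements merged into one kernel-verified Lean document; each statement's English description precedes it below -/
import Mathlib

section
/- Let C be a closed, normal cone with nonempty interior in a real Banach space and let f : int C → int C be real analytic, order-preserving, and subhomogeneous. Assume that C is regular or that f is γ-condensing or τ-condensing. Then the following are equivalent: (a) Fix(f) is nonempty and bounded in Thompson's metric d_T; (b) there exist x, y ∈ int C with f(x) − x ∈ int C and y − f(y) ∈ int C; (c) λ(f) > 1 and r(f) < 1; (d) f has a unique fixed point in int C; (e) there exists u ∈ int C such that lim_{k→∞} f^k(x) = u for every x ∈ int C. -/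
/-!
Write `≤` for the order of `C` and `≪` for `y - x ∈ int C`.

Everything rests on one compactness statement (`tendsto_fixed_of_monotone`): a monotone orbit of
`z ↦ c • f z + w`, `0 < c ≤ 1`, `w ∈ C`, that stays in an order interval of `int C` converges to a
fixed point of that map. For a regular cone this is the definition; for condensing `f` the orbit is
a point together with a nonexpansive image of `f` of the orbit, so its measure of noncompactness
vanishes, and a precompact monotone sequence converges in a normal cone.

* (b) ⇔ (c) unfolds the Collatz–Wielandt numbers.
* (b) ⇒ (a): if `x ≪ f x` and `f y ≪ y`, subhomogeneity forces all fixed points into `[x, y]`, and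
  the orbit of `x`, bounded by a multiple of `y`, increases to a fixed point.
* (a) ⇒ (b): let `u` be a fixed point and let `v` be a multiple of `u` above all fixed points. The
  orbit of `v` decreases to a fixed point, so `f^k v ≪ v` for some `k`. This persists for
  `g = f + e • u` with `e` small, hence the increasing `g`-orbit of `u` stays below `v` and tends
  to some `y` with `f y = y - e • u ≪ y`. The other half uses `(1 - e) • f` in the same way.
* (a) ⇒ (d) is the only place where analyticity is needed (`IsSubhomMap.fixed_le_of_analytic`): a
  functional supporting `C` at `β • p - q`, with `β > 1` least such that `q ≤ β • p`, is linear along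
  `t ↦ f^k (t • p)` for `t ∈ [1, β]`, hence for all `t > 0`, which contradicts convergence of these
  orbits to a bounded set of fixed points.
* (d) ⇒ (e): every orbit is squeezed between orbits of multiples of the fixed point, which converge
  monotonically. The implications (d) ⇒ (a) and (e) ⇒ (d) are immediate.
-/

set_option linter.unusedSectionVars false

open Filter Topology Bornology

section ConeDefs

variable {X : Type*} [NormedAddCommGroup X] [NormedSpace ℝ X]

/-- `C` is a closed cone: a closed convex set with `l • C ⊆ C` for `l ≥ 0` and `C ∩ (-C) = {0}`. -/
def IsClosedCone (C : Set X) : Prop :=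
  IsClosed C ∧ Convex ℝ C ∧ (∀ l : ℝ, 0 ≤ l → ∀ x ∈ C, l • x ∈ C) ∧ C ∩ (-C) = {0}

/-- `C` is a normal cone: `0 ≤ x ≤ y` implies `‖x‖ ≤ κ * ‖y‖`. -/
def IsNormalCone (C : Set X) : Prop :=
  ∃ κ : ℝ, ∀ x y : X, x ∈ C → y - x ∈ C → ‖x‖ ≤ κ * ‖y‖

/-- `C` is a regular cone: every decreasing sequence in `C` converges in norm. -/
def IsRegularCone (C : Set X) : Prop :=
  ∀ x : ℕ → X, (∀ n, x n ∈ C) → (∀ n, x n - x (n + 1) ∈ C) →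
    ∃ l : X, Tendsto x atTop (𝓝 l)

/-- Thompson's metric: `d_T(x,y) = log inf {β ≥ 1 : β⁻¹ • x ≤ y ∧ y ≤ β • x}`,
where `≤` is the order induced by the cone `C`. -/
noncomputable def thompsonDist (C : Set X) (x y : X) : ℝ :=
  Real.log (sInf {β : ℝ | 1 ≤ β ∧ y - β⁻¹ • x ∈ C ∧ β • x - y ∈ C})

/-- `A` is bounded in Thompson's metric. -/
def TBounded (C A : Set X) : Prop :=
  ∃ d : ℝ, ∀ x ∈ A, ∀ y ∈ A, thompsonDist C x y ≤ d

/-- Kuratowski's measure of noncompactness for the norm: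
the infimum of all `d > 0` such that `A` admits a finite cover by sets of diameter at most `d`. -/
noncomputable def kuratowski (A : Set X) : ℝ :=
  sInf {d : ℝ | 0 < d ∧ ∃ (n : ℕ) (S : Fin n → Set X), A ⊆ ⋃ i, S i ∧
    ∀ i, IsBounded (S i) ∧ Metric.diam (S i) ≤ d}

/-- Kuratowski's measure of noncompactness for Thompson's metric: the infimum of all `d > 0`
such that `A` admits a finite cover by subsets of `interior C` of `d_T`-diameter at most `d`. -/
noncomputable def tauMNC (C A : Set X) : ℝ :=
  sInf {d : ℝ | 0 < d ∧ ∃ (n : ℕ) (S : Fin n → Set X), A ⊆ ⋃ i, S i ∧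
    ∀ i, S i ⊆ interior C ∧ ∀ x ∈ S i, ∀ y ∈ S i, thompsonDist C x y ≤ d}

/-- `f` is continuous and `γ`-condensing on `D`. -/
def GammaCondensing {X : Type*} [NormedAddCommGroup X] [NormedSpace ℝ X]
    (f : X → X) (D : Set X) : Prop :=
  ContinuousOn f D ∧ ∀ A ⊆ D, IsBounded A → 0 < kuratowski A →
    kuratowski (f '' A) < kuratowski A

/-- `f` is continuous and `τ`-condensing on `D`. -/
def TauCondensing (C : Set X) (f : X → X) (D : Set X) : Prop :=
  ContinuousOn f D ∧ ∀ A ⊆ D, TBounded C A → 0 < tauMNC C A →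
    tauMNC C (f '' A) < tauMNC C A

/-- `f` is nonexpansive with respect to Thompson's metric on `D`. -/
def TNonexpansiveOn (C : Set X) (f : X → X) (D : Set X) : Prop :=
  ∀ x ∈ D, ∀ y ∈ D, thompsonDist C (f x) (f y) ≤ thompsonDist C x y

/-- `f` is order-preserving on `D` for the order induced by `C`. -/
def OrderPreservingOn (C : Set X) (f : X → X) (D : Set X) : Prop :=
  ∀ x ∈ D, ∀ y ∈ D, y - x ∈ C → f y - f x ∈ C

/-- `f` is subhomogeneous on `D`: `f (t • x) ≤ t • f x` for `t ≥ 1`. -/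
def SubhomogeneousOn (C : Set X) (f : X → X) (D : Set X) : Prop :=
  ∀ t : ℝ, 1 ≤ t → ∀ x ∈ D, t • f x - f (t • x) ∈ C

/-- `M(x/y) = inf {β > 0 : x ≤ β • y}`, valued in `ℝ≥0∞` (`⊤` if no such `β` exists). -/
noncomputable def Mratio (C : Set X) (x y : X) : ENNReal :=
  sInf {b : ENNReal | ∃ β : ℝ, 0 < β ∧ b = ENNReal.ofReal β ∧ β • y - x ∈ C}

/-- `m(x/y) = sup {α > 0 : α • y ≤ x}`, valued in `ℝ≥0∞`. -/
noncomputable def mratio (C : Set X) (x y : X) : ENNReal :=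
  sSup {b : ENNReal | ∃ α : ℝ, 0 < α ∧ b = ENNReal.ofReal α ∧ x - α • y ∈ C}

/-- The upper Collatz–Wielandt number `r(f) = inf_{x ∈ int C} M(f(x)/x)`. -/
noncomputable def upperCW (C : Set X) (f : X → X) : ENNReal :=
  ⨅ x ∈ interior C, Mratio C (f x) x

/-- The lower Collatz–Wielandt number `λ(f) = sup_{x ∈ int C} m(f(x)/x)`. -/
noncomputable def lowerCW (C : Set X) (f : X → X) : ENNReal :=
  ⨆ x ∈ interior C, mratio C (f x) x

/-- The order-unit norm `‖x‖_u = inf {k > 0 : -k • u ≤ x ≤ k • u}`. -/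
noncomputable def orderUnitNorm (C : Set X) (u x : X) : ℝ :=
  sInf {k : ℝ | 0 < k ∧ x + k • u ∈ C ∧ k • u - x ∈ C}

end ConeDefs

section ConeLemmas

variable {X : Type*} [NormedAddCommGroup X] [NormedSpace ℝ X] {C : Set X}

/-! ### The cone order -/

theorem IsClosedCone.smul_mem (hC : IsClosedCone C) {c : ℝ} (hc : 0 ≤ c) {x : X} (hx : x ∈ C) :
    c • x ∈ C := hC.2.2.1 c hc x hx

theorem IsClosedCone.add_mem (hC : IsClosedCone C) {x y : X} (hx : x ∈ C) (hy : y ∈ C) :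
    x + y ∈ C := by
  have h : (1 / 2 : ℝ) • x + (1 / 2 : ℝ) • y ∈ C :=
    hC.2.1 hx hy (by norm_num) (by norm_num) (by norm_num)
  have h2 := hC.smul_mem (c := 2) (by norm_num) h
  convert h2 using 1
  module

theorem IsClosedCone.zero_mem (hC : IsClosedCone C) : (0 : X) ∈ C := by
  have : (0 : X) ∈ C ∩ (-C) := by rw [hC.2.2.2]; rfl
  exact this.1

theorem IsClosedCone.le_rfl (hC : IsClosedCone C) (x : X) : x - x ∈ C := by
  rw [sub_self]; exact hC.zero_mem

theorem IsClosedCone.le_trans (hC : IsClosedCone C) {x y z : X} (h1 : y - x ∈ C)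
    (h2 : z - y ∈ C) : z - x ∈ C := by
  have := hC.add_mem h1 h2
  convert this using 1
  abel

theorem IsClosedCone.le_antisymm (hC : IsClosedCone C) {x y : X} (h1 : y - x ∈ C)
    (h2 : x - y ∈ C) : x = y := by
  have : y - x ∈ C ∩ (-C) := ⟨h1, by simpa using h2⟩
  rw [hC.2.2.2] at this
  exact (sub_eq_zero.1 this).symm

theorem IsClosedCone.smul_le_smul (hC : IsClosedCone C) {c : ℝ} (hc : 0 ≤ c) {x y : X}
    (h : y - x ∈ C) : c • y - c • x ∈ C := by
  rw [← smul_sub]; exact hC.smul_mem hc h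

theorem IsClosedCone.smul_le_smul_left (hC : IsClosedCone C) {a b : ℝ} (hab : a ≤ b) {x : X}
    (h : x ∈ C) : b • x - a • x ∈ C := by
  rw [← sub_smul]; exact hC.smul_mem (sub_nonneg.2 hab) h

theorem IsClosedCone.add_mem_interior (hC : IsClosedCone C) {x y : X} (hx : x ∈ interior C)
    (hy : y ∈ C) : x + y ∈ interior C := by
  have hsub : (fun z => z - y) ⁻¹' interior C ⊆ C := by
    intro z hz
    have := hC.add_mem (interior_subset hz) hy
    simpa using this
  have hopen : IsOpen ((fun z => z - y) ⁻¹' interior C) :=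
    isOpen_interior.preimage (by fun_prop)
  exact interior_maximal hsub hopen (by simpa using hx)

theorem IsClosedCone.mem_interior_of_le (hC : IsClosedCone C) {x y : X} (hx : x ∈ interior C)
    (hy : y - x ∈ C) : y ∈ interior C := by
  simpa using hC.add_mem_interior hx hy

theorem IsClosedCone.smul_mem_interior (hC : IsClosedCone C) {c : ℝ} (hc : 0 < c) {x : X}
    (hx : x ∈ interior C) : c • x ∈ interior C := by
  have hsub : (fun z => c⁻¹ • z) ⁻¹' interior C ⊆ C := by
    intro z hz
    have := hC.smul_mem hc.le (interior_subset hz)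
    simpa [smul_smul, hc.ne'] using this
  have hopen : IsOpen ((fun z : X => c⁻¹ • z) ⁻¹' interior C) :=
    isOpen_interior.preimage (by fun_prop)
  exact interior_maximal hsub hopen (by simpa [smul_smul, hc.ne'] using hx)

/-- An interior point still dominates a small multiple of any given vector. -/
theorem exists_pos_sub_smul_mem {u : X} (hu : u ∈ interior C) (z : X) :
    ∃ e : ℝ, 0 < e ∧ e < 1 ∧ u - e • z ∈ C := by
  have hcont : Tendsto (fun e : ℝ => u - e • z) (𝓝[>] 0) (𝓝 u) := by
    have : ContinuousAt (fun e : ℝ => u - e • z) 0 := by fun_prop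
    have := this.tendsto
    simp only [zero_smul, sub_zero] at this
    exact this.mono_left nhdsWithin_le_nhds
  have h1 := hcont.eventually (isOpen_interior.mem_nhds hu)
  have h2 : ∀ᶠ e : ℝ in 𝓝[>] 0, e ∈ Set.Ioo (0 : ℝ) 1 := Ioo_mem_nhdsGT one_pos
  obtain ⟨e, he, he2⟩ := (h1.and h2).exists
  exact ⟨e, he2.1, he2.2, interior_subset he⟩

theorem IsClosedCone.exists_le_smul (hC : IsClosedCone C) {u : X} (hu : u ∈ interior C) (z : X) :
    ∃ M : ℝ, 1 ≤ M ∧ M • u - z ∈ C := by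
  obtain ⟨e, he, he1, h⟩ := exists_pos_sub_smul_mem hu z
  refine ⟨e⁻¹, (one_le_inv₀ he).2 he1.le, ?_⟩
  have := hC.smul_mem (inv_pos.2 he).le h
  simpa [smul_sub, smul_smul, he.ne'] using this

theorem IsNormalCone.exists_nonneg (hN : IsNormalCone C) :
    ∃ κ : ℝ, 0 ≤ κ ∧ ∀ x y : X, x ∈ C → y - x ∈ C → ‖x‖ ≤ κ * ‖y‖ := by
  obtain ⟨κ, h⟩ := hN
  exact ⟨|κ|, abs_nonneg _, fun x y hx hy => (h x y hx hy).trans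
    (mul_le_mul_of_nonneg_right (le_abs_self _) (norm_nonneg _))⟩

/-- Squeeze theorem for a normal cone. -/
theorem IsNormalCone.squeeze (hN : IsNormalCone C) {a s b : ℕ → X} {l : X}
    (ha : Tendsto a atTop (𝓝 l)) (hb : Tendsto b atTop (𝓝 l))
    (h1 : ∀ n, s n - a n ∈ C) (h2 : ∀ n, b n - s n ∈ C) : Tendsto s atTop (𝓝 l) := by
  obtain ⟨κ, hκ, h⟩ := hN.exists_nonneg
  have h0 : Tendsto (fun n => s n - a n) atTop (𝓝 0) := by
    refine squeeze_zero_norm (a := fun n => κ * ‖b n - a n‖) (fun n => ?_) ?_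
    · exact h _ _ (h1 n) (by simpa using h2 n)
    · have := ((hb.sub ha).norm).const_mul κ
      simpa using this
  simpa using h0.add ha

/-! ### Thompson's metric -/

theorem thompson_aux_one_le (x y : X)
    (hne : {β : ℝ | 1 ≤ β ∧ y - β⁻¹ • x ∈ C ∧ β • x - y ∈ C}.Nonempty) :
    1 ≤ sInf {β : ℝ | 1 ≤ β ∧ y - β⁻¹ • x ∈ C ∧ β • x - y ∈ C} :=
  le_csInf hne fun _ h => h.1

theorem IsClosedCone.inv_smul_le (hC : IsClosedCone C) {b : ℝ} (hb : 0 < b) {x y : X}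
    (h : b • y - x ∈ C) : y - b⁻¹ • x ∈ C := by
  have := hC.smul_mem (inv_pos.2 hb).le h
  simpa [smul_sub, smul_smul, hb.ne'] using this

theorem IsClosedCone.le_smul_of_inv (hC : IsClosedCone C) {b : ℝ} (hb : 0 < b) {x y : X}
    (h : y - b⁻¹ • x ∈ C) : b • y - x ∈ C := by
  have := hC.smul_mem hb.le h
  simpa [smul_sub, smul_smul, hb.ne'] using this

theorem IsClosedCone.thompsonDist_le_log (hC : IsClosedCone C) {x y : X} {b : ℝ} (hb : 1 ≤ b)
    (h1 : b • y - x ∈ C) (h2 : b • x - y ∈ C) : thompsonDist C x y ≤ Real.log b := by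
  have hmem : b ∈ {β : ℝ | 1 ≤ β ∧ y - β⁻¹ • x ∈ C ∧ β • x - y ∈ C} :=
    ⟨hb, hC.inv_smul_le (by linarith) h1, h2⟩
  refine Real.log_le_log ?_ (csInf_le ⟨1, fun _ h => h.1⟩ hmem)
  linarith [thompson_aux_one_le x y ⟨b, hmem⟩]

theorem IsClosedCone.thompsonDist_self_le (hC : IsClosedCone C) (x : X) :
    thompsonDist C x x ≤ 0 := by
  have h : (1 : ℝ) • x - x ∈ C := by rw [one_smul]; exact hC.le_rfl x
  simpa using hC.thompsonDist_le_log (_root_.le_rfl) h h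

theorem IsClosedCone.thompson_nonempty (hC : IsClosedCone C) {x y : X} (hx : x ∈ interior C)
    (hy : y ∈ interior C) :
    {β : ℝ | 1 ≤ β ∧ y - β⁻¹ • x ∈ C ∧ β • x - y ∈ C}.Nonempty := by
  obtain ⟨M, hM, h⟩ := hC.exists_le_smul hx y
  obtain ⟨N, hN, h'⟩ := hC.exists_le_smul hy x
  have hMN : M ≤ max M N := le_max_left _ _
  refine ⟨max M N, hM.trans hMN, hC.inv_smul_le (by linarith) ?_, ?_⟩
  · exact hC.le_trans h' (hC.smul_le_smul_left (le_max_right _ _) (interior_subset hy))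
  · exact hC.le_trans h (hC.smul_le_smul_left hMN (interior_subset hx))

theorem IsClosedCone.le_smul_of_thompsonDist_lt (hC : IsClosedCone C) {x y : X}
    (hx : x ∈ interior C) (hy : y ∈ interior C) {d : ℝ} (hd : thompsonDist C x y < d) :
    1 ≤ Real.exp d ∧ Real.exp d • y - x ∈ C ∧ Real.exp d • x - y ∈ C := by
  have hne := hC.thompson_nonempty hx hy
  have h1 := thompson_aux_one_le x y hne
  have h2 : sInf {β : ℝ | 1 ≤ β ∧ y - β⁻¹ • x ∈ C ∧ β • x - y ∈ C} < Real.exp d :=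
    (Real.log_lt_iff_lt_exp (by linarith)).1 hd
  obtain ⟨b, ⟨hb1, hb2, hb3⟩, hb⟩ := exists_lt_of_csInf_lt hne h2
  refine ⟨hb1.trans hb.le, ?_, ?_⟩
  · exact hC.le_trans (hC.le_smul_of_inv (by linarith) hb2)
      (hC.smul_le_smul_left hb.le (interior_subset hy))
  · exact hC.le_trans hb3 (hC.smul_le_smul_left hb.le (interior_subset hx))

/-- Affine maps `z ↦ c • z + w` with `c > 0` and `w ∈ C` do not expand Thompson's metric. -/
theorem IsClosedCone.thompsonDist_affine_le (hC : IsClosedCone C) {x y w : X} {c : ℝ}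
    (hx : x ∈ interior C) (hy : y ∈ interior C) (hc : 0 < c) (hw : w ∈ C) :
    thompsonDist C (c • x + w) (c • y + w) ≤ thompsonDist C x y := by
  have hne := hC.thompson_nonempty hx hy
  have hsub : {β : ℝ | 1 ≤ β ∧ y - β⁻¹ • x ∈ C ∧ β • x - y ∈ C} ⊆
      {β : ℝ | 1 ≤ β ∧ (c • y + w) - β⁻¹ • (c • x + w) ∈ C ∧
        β • (c • x + w) - (c • y + w) ∈ C} := by
    rintro b ⟨hb1, hb2, hb3⟩
    refine ⟨hb1, ?_, ?_⟩
    · have := hC.add_mem (hC.smul_mem hc.le hb2)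
        (hC.smul_mem (c := 1 - b⁻¹) (sub_nonneg.2 (inv_le_one_of_one_le₀ hb1)) hw)
      convert this using 1
      module
    · have := hC.add_mem (hC.smul_mem hc.le hb3)
        (hC.smul_mem (c := b - 1) (by linarith) hw)
      convert this using 1
      module
  refine Real.log_le_log ?_ (csInf_le_csInf ⟨1, fun _ h => h.1⟩ hne hsub)
  linarith [thompson_aux_one_le (C := C) (c • x + w) (c • y + w) (hne.mono hsub)]

theorem IsClosedCone.tBounded_of_le (hC : IsClosedCone C) {A : Set X} {a b : X}
    (ha : a ∈ interior C) (h1 : ∀ x ∈ A, x - a ∈ C) (h2 : ∀ x ∈ A, b - x ∈ C) :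
    TBounded C A := by
  obtain ⟨M, hM, h⟩ := hC.exists_le_smul ha b
  have key : ∀ x ∈ A, ∀ y ∈ A, M • y - x ∈ C := fun x hx y hy =>
    hC.le_trans (hC.le_trans (h2 x hx) h) (hC.smul_le_smul (by linarith) (h1 y hy))
  exact ⟨Real.log M, fun x hx y hy =>
    hC.thompsonDist_le_log hM (key x hx y hy) (key y hy x hx)⟩

theorem isBounded_of_le (hN : IsNormalCone C) {A : Set X} {a b : X}
    (h1 : ∀ x ∈ A, x - a ∈ C) (h2 : ∀ x ∈ A, b - x ∈ C) : IsBounded A := by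
  obtain ⟨κ, h⟩ := hN
  refine (Metric.isBounded_closedBall (x := a) (r := κ * ‖b - a‖)).subset fun x hx => ?_
  rw [mem_closedBall_iff_norm]
  exact h _ _ (h1 x hx) (by simpa using h2 x hx)

/-- Below a fixed vector `b`, two-sided multiplicative closeness forces closeness in norm. -/
theorem IsClosedCone.norm_sub_le (hC : IsClosedCone C) {κ : ℝ}
    (hκ : ∀ x y : X, x ∈ C → y - x ∈ C → ‖x‖ ≤ κ * ‖y‖) {x y b : X} {t : ℝ} (ht : 1 ≤ t)
    (hx : b - x ∈ C) (hy : b - y ∈ C)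
    (h1 : t • y - x ∈ C) (h2 : t • x - y ∈ C) :
    ‖x - y‖ ≤ (t - 1) * ((2 * κ + 1) * ‖b‖) := by
  have e1 : (t - 1) • b - (x - y) ∈ C := by
    have := hC.add_mem h1 (hC.smul_mem (c := t - 1) (by linarith) hy)
    convert this using 1
    module
  have e2 : (t - 1) • b + (x - y) ∈ C := by
    have := hC.add_mem h2 (hC.smul_mem (c := t - 1) (by linarith) hx)
    convert this using 1
    module
  have h3 := hκ ((t - 1) • b + (x - y)) ((2 * (t - 1)) • b) e2 (by convert e1 using 1; module)
  have h4 : ‖x - y‖ ≤ ‖(t - 1) • b + (x - y)‖ + ‖(t - 1) • b‖ := by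
    have := _root_.norm_sub_le ((t - 1) • b + (x - y)) ((t - 1) • b)
    simpa using this
  rw [norm_smul, Real.norm_of_nonneg (by linarith)] at h3 h4
  linarith

/-! ### Convergence of monotone orbits -/

/-- A sequence which is monotone for a normal cone order and which, for every `e > 0`, splits into
finitely many classes of diameter at most `e` is Cauchy: one of the classes is visited infinitely
often, and every late term lies in an order interval between two of these visits. -/
theorem cauchySeq_of_monotone_of_cover (hN : IsNormalCone C) {s : ℕ → X}
    (hmono : ∀ n m, n ≤ m → s m - s n ∈ C)
    (hcov : ∀ e : ℝ, 0 < e → ∃ (N : ℕ) (i : ℕ → Fin N),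
      ∀ n m, i n = i m → ‖s n - s m‖ ≤ e) : CauchySeq s := by
  obtain ⟨κ, hκ, h⟩ := hN.exists_nonneg
  refine Metric.cauchySeq_iff'.2 fun e he => ?_
  obtain ⟨N, i, hd⟩ := hcov (e / (κ + 1)) (by positivity)
  obtain ⟨j, hj⟩ := Finite.exists_infinite_fiber i
  have hinf : (i ⁻¹' {j}).Infinite := Set.infinite_coe_iff.1 hj
  obtain ⟨n0, hn0⟩ := hinf.nonempty
  refine ⟨n0, fun m hm => ?_⟩
  obtain ⟨m', hm', hmm'⟩ := hinf.exists_gt m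
  have h1 := h (s m - s n0) (s m' - s n0) (hmono _ _ hm)
    (by simpa using hmono m m' hmm'.le)
  have h2 := hd m' n0 (Eq.trans hm' (Eq.symm hn0))
  rw [dist_eq_norm]
  calc ‖s m - s n0‖ ≤ κ * (e / (κ + 1)) := h1.trans (mul_le_mul_of_nonneg_left h2 hκ)
    _ < e := by
      rw [mul_div_assoc', div_lt_iff₀ (by positivity)]
      nlinarith

/-- If `f` is condensing and `s (n + 1) = c • f (s n) + w` with `0 < c ≤ 1` and `w ∈ C`, then the
range of `s` is a point together with a nonexpansive image of `f '' range s`, so its measure of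
noncompactness vanishes. Within an order interval, coverings that are fine for Thompson's metric
are fine for the norm. -/
theorem finite_classes_of_condensing (hC : IsClosedCone C) (hN : IsNormalCone C) {f : X → X}
    (hf : Set.MapsTo f (interior C) (interior C))
    (hop : OrderPreservingOn C f (interior C))
    (hcond : GammaCondensing f (interior C) ∨ TauCondensing C f (interior C))
    {c : ℝ} (hc0 : 0 < c) (hc1 : c ≤ 1) {w : X} (hw : w ∈ C) {s : ℕ → X} {a b : X}
    (ha : a ∈ interior C) (has : ∀ n, s n - a ∈ C) (hsb : ∀ n, b - s n ∈ C)
    (hs : ∀ n, s (n + 1) = c • f (s n) + w) (e : ℝ) (he : 0 < e) :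
    ∃ (N : ℕ) (i : ℕ → Fin N), ∀ n m, i n = i m → ‖s n - s m‖ ≤ e := by
  have hsi : ∀ n, s n ∈ interior C := fun n => hC.mem_interior_of_le ha (has n)
  have hAi : Set.range s ⊆ interior C := by rintro _ ⟨n, rfl⟩; exact hsi n
  have hb : b ∈ interior C := hC.mem_interior_of_le (hsi 0) (hsb 0)
  have hA1 : ∀ x ∈ Set.range s, x - a ∈ C := by rintro _ ⟨n, rfl⟩; exact has n
  have hA2 : ∀ x ∈ Set.range s, b - x ∈ C := by rintro _ ⟨n, rfl⟩; exact hsb n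
  have hB1 : ∀ x ∈ f '' Set.range s, x - f a ∈ C := by
    rintro _ ⟨_, ⟨n, rfl⟩, rfl⟩; exact hop _ ha _ (hsi n) (has n)
  have hB2 : ∀ x ∈ f '' Set.range s, f b - x ∈ C := by
    rintro _ ⟨_, ⟨n, rfl⟩, rfl⟩; exact hop _ (hsi n) _ hb (hsb n)
  -- a cover of `f '' range s` is transported by `z ↦ c • z + w`, adding the singleton `{s 0}`
  have hcover : ∀ (n : ℕ) (S : Fin n → Set X), f '' Set.range s ⊆ ⋃ i, S i →
      Set.range s ⊆ ⋃ i, (Fin.cons {s 0} (fun i => (fun z => c • z + w) '' S i) :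
        Fin (n + 1) → Set X) i := by
    rintro n S hS _ ⟨k, rfl⟩
    rw [Set.mem_iUnion]
    cases k with
    | zero => exact ⟨0, by simp⟩
    | succ k =>
      obtain ⟨i, hi⟩ := Set.mem_iUnion.1 (hS ⟨s k, ⟨k, rfl⟩, rfl⟩)
      exact ⟨i.succ, by simpa using ⟨f (s k), hi, (hs k).symm⟩⟩
  rcases hcond with hg | ht
  · have hle : kuratowski (Set.range s) ≤ kuratowski (f '' Set.range s) := by
      refine le_csInf ?_ ?_
      · refine ⟨Metric.diam (f '' Set.range s) + 1, by positivity, 1, fun _ => f '' Set.range s,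
          fun x hx => Set.mem_iUnion.2 ⟨0, hx⟩, fun _ => ⟨isBounded_of_le hN hB1 hB2, by simp⟩⟩
      · rintro d ⟨hd, n, S, hS, hSd⟩
        refine csInf_le ⟨0, fun _ h => h.1.le⟩ ⟨hd, n + 1, _, hcover n S hS, fun i => ?_⟩
        refine Fin.cases ?_ (fun j => ?_) i
        · simpa using hd.le
        · have hdist : ∀ x ∈ (fun z => c • z + w) '' S j, ∀ y ∈ (fun z => c • z + w) '' S j,
              dist x y ≤ d := by
            rintro _ ⟨x, hx, rfl⟩ _ ⟨y, hy, rfl⟩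
            have h1 := Metric.dist_le_diam_of_mem (hSd j).1 hx hy
            simp only [dist_add_right, dist_smul₀, Real.norm_of_nonneg hc0.le]
            have h2 : c * dist x y ≤ 1 * dist x y :=
              mul_le_mul_of_nonneg_right hc1 dist_nonneg
            linarith [(hSd j).2]
          exact ⟨Metric.isBounded_iff.2 ⟨d, fun x hx y hy => hdist x hx y hy⟩,
            Metric.diam_le_of_forall_dist_le hd.le hdist⟩
    have hzero : kuratowski (Set.range s) ≤ 0 := by
      by_contra hpos
      exact absurd (hg.2 _ hAi (isBounded_of_le hN hA1 hA2) (not_le.1 hpos)) (not_lt.2 hle)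
    have hne : {d : ℝ | 0 < d ∧ ∃ (n : ℕ) (S : Fin n → Set X), Set.range s ⊆ ⋃ i, S i ∧
        ∀ i, IsBounded (S i) ∧ Metric.diam (S i) ≤ d}.Nonempty :=
      ⟨Metric.diam (Set.range s) + 1, by positivity, 1, fun _ => Set.range s,
          fun x hx => Set.mem_iUnion.2 ⟨0, hx⟩, fun _ => ⟨isBounded_of_le hN hA1 hA2, by simp⟩⟩
    obtain ⟨d, ⟨hd, n, S, hS, hSd⟩, hde⟩ := exists_lt_of_csInf_lt hne (hzero.trans_lt he)
    have hi : ∀ k, ∃ i, s k ∈ S i := fun k => Set.mem_iUnion.1 (hS ⟨k, rfl⟩)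
    choose i hi using hi
    refine ⟨n, i, fun k m hkm => ?_⟩
    have h1 := Metric.dist_le_diam_of_mem (hSd (i k)).1 (hi k) (hkm ▸ hi m)
    rw [dist_eq_norm] at h1
    linarith [(hSd (i k)).2]
  · have hne : ∀ A : Set X, A ⊆ interior C → TBounded C A →
        {d : ℝ | 0 < d ∧ ∃ (n : ℕ) (S : Fin n → Set X), A ⊆ ⋃ i, S i ∧
        ∀ i, S i ⊆ interior C ∧ ∀ x ∈ S i, ∀ y ∈ S i, thompsonDist C x y ≤ d}.Nonempty := by
      rintro A hA ⟨d, hd⟩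
      exact ⟨|d| + 1, by positivity, 1, fun _ => A, fun x hx => Set.mem_iUnion.2 ⟨0, hx⟩,
        fun _ => ⟨hA, fun x hx y hy => by linarith [hd x hx y hy, le_abs_self d]⟩⟩
    have hle : tauMNC C (Set.range s) ≤ tauMNC C (f '' Set.range s) := by
      refine le_csInf (hne _ ?_ (hC.tBounded_of_le (hf ha) hB1 hB2)) ?_
      · rintro _ ⟨x, hx, rfl⟩; exact hf (hAi hx)
      · rintro d ⟨hd, n, S, hS, hSd⟩
        refine csInf_le ⟨0, fun _ h => h.1.le⟩ ⟨hd, n + 1, _, hcover n S hS, fun i => ?_⟩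
        refine Fin.cases ?_ (fun j => ?_) i
        · refine ⟨by simpa using hsi 0, ?_⟩
          simpa using (hC.thompsonDist_self_le (s 0)).trans hd.le
        · simp only [Fin.cons_succ]
          refine ⟨?_, ?_⟩
          · rintro _ ⟨x, hx, rfl⟩
            exact hC.add_mem_interior (hC.smul_mem_interior hc0 ((hSd j).1 hx)) hw
          · rintro _ ⟨x, hx, rfl⟩ _ ⟨y, hy, rfl⟩
            exact (hC.thompsonDist_affine_le ((hSd j).1 hx) ((hSd j).1 hy) hc0 hw).trans
              ((hSd j).2 x hx y hy)
    have hbdd := hC.tBounded_of_le ha hA1 hA2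
    have hzero : tauMNC C (Set.range s) ≤ 0 := by
      by_contra hpos
      exact absurd (ht.2 _ hAi hbdd (not_le.1 hpos)) (not_lt.2 hle)
    obtain ⟨κ, hκ0, hκ⟩ := hN.exists_nonneg
    -- choose `t` with `(exp t - 1) * ((2 * κ + 1) * ‖b‖) ≤ e`
    have hlim : Tendsto (fun t : ℝ => (Real.exp t - 1) * ((2 * κ + 1) * ‖b‖)) (𝓝[>] 0) (𝓝 0) := by
      have : ContinuousAt (fun t : ℝ => (Real.exp t - 1) * ((2 * κ + 1) * ‖b‖)) 0 := by fun_prop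
      have := this.tendsto
      simp only [Real.exp_zero, sub_self, zero_mul] at this
      exact this.mono_left nhdsWithin_le_nhds
    obtain ⟨t, hte, ht0⟩ := ((hlim.eventually (gt_mem_nhds he)).and self_mem_nhdsWithin).exists
    obtain ⟨d, ⟨hd, n, S, hS, hSd⟩, hde⟩ :=
      exists_lt_of_csInf_lt (hne _ hAi hbdd) (hzero.trans_lt ht0)
    have hi : ∀ k, ∃ i, s k ∈ S i := fun k => Set.mem_iUnion.1 (hS ⟨k, rfl⟩)
    choose i hi using hi
    refine ⟨n, i, fun k m hkm => ?_⟩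
    obtain ⟨h1, h2, h3⟩ := hC.le_smul_of_thompsonDist_lt (hsi k) (hsi m)
      (((hSd (i k)).2 _ (hi k) _ (hkm ▸ hi m)).trans_lt hde)
    exact (hC.norm_sub_le hκ h1 (hsb k) (hsb m) h2 h3).trans hte.le

/-- Every monotone orbit of `z ↦ c • f z + w` that stays in an order interval of `int C`
converges to a fixed point. -/
theorem tendsto_fixed_of_monotone (hC : IsClosedCone C) (hN : IsNormalCone C) [CompleteSpace X]
    {f : X → X}
    (hf : Set.MapsTo f (interior C) (interior C))
    (hcont : ContinuousOn f (interior C))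
    (hop : OrderPreservingOn C f (interior C))
    (hcond : IsRegularCone C ∨ GammaCondensing f (interior C) ∨ TauCondensing C f (interior C))
    {c : ℝ} (hc0 : 0 < c) (hc1 : c ≤ 1) {w : X} (hw : w ∈ C) {s : ℕ → X} {a b : X}
    (ha : a ∈ interior C) (has : ∀ n, s n - a ∈ C) (hsb : ∀ n, b - s n ∈ C)
    (hs : ∀ n, s (n + 1) = c • f (s n) + w)
    (hmono : (∀ n, s (n + 1) - s n ∈ C) ∨ (∀ n, s n - s (n + 1) ∈ C)) :
    ∃ l ∈ interior C, Tendsto s atTop (𝓝 l) ∧ c • f l + w = l ∧ l - a ∈ C ∧ b - l ∈ C := by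
  have hsi : ∀ n, s n ∈ interior C := fun n => hC.mem_interior_of_le ha (has n)
  have hlim : ∃ l, Tendsto s atTop (𝓝 l) := by
    rcases hcond with hreg | hcond
    · rcases hmono with h | h
      · obtain ⟨l, hl⟩ := hreg (fun n => b - s n) hsb (fun n => by simpa using h n)
        exact ⟨b - l, by simpa using hl.const_sub b⟩
      · exact hreg s (fun n => interior_subset (hsi n)) h
    · have hcl := finite_classes_of_condensing hC hN hf hop hcond hc0 hc1 hw ha has hsb hs
      rcases hmono with h | h
      · refine cauchySeq_tendsto_of_complete (cauchySeq_of_monotone_of_cover hN ?_ hcl)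
        intro n m hnm
        induction m, hnm using Nat.le_induction with
        | base => exact hC.le_rfl _
        | succ m _ ih => exact hC.le_trans ih (h m)
      · have hc : CauchySeq (fun n => -s n) := by
          refine cauchySeq_of_monotone_of_cover hN ?_ fun e he => ?_
          · intro n m hnm
            rw [neg_sub_neg]
            induction m, hnm using Nat.le_induction with
            | base => exact hC.le_rfl _
            | succ m _ ih => exact hC.le_trans (h m) ih
          · obtain ⟨N, i, hi⟩ := hcl e he
            refine ⟨N, i, fun n m hnm => ?_⟩
            rw [neg_sub_neg, norm_sub_rev]
            exact hi n m hnm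
        obtain ⟨l, hl⟩ := cauchySeq_tendsto_of_complete hc
        exact ⟨-l, by simpa using hl.neg⟩
  obtain ⟨l, hl⟩ := hlim
  have hla : l - a ∈ C := hC.1.mem_of_tendsto (hl.sub_const a) (Eventually.of_forall has)
  have hlb : b - l ∈ C := hC.1.mem_of_tendsto (hl.const_sub b) (Eventually.of_forall hsb)
  have hli := hC.mem_interior_of_le ha hla
  refine ⟨l, hli, hl, ?_, hla, hlb⟩
  have h1 : Tendsto (fun n => c • f (s n) + w) atTop (𝓝 (c • f l + w)) :=
    (((hcont.continuousAt (isOpen_interior.mem_nhds hli)).tendsto.comp hl).const_smul c).add_const w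
  have h2 : Tendsto (fun n => s (n + 1)) atTop (𝓝 l) := hl.comp (tendsto_add_atTop_nat 1)
  simp only [hs] at h2
  exact tendsto_nhds_unique h1 h2

end ConeLemmas

section Dynamics

variable {X : Type*} [NormedAddCommGroup X] [NormedSpace ℝ X] {C : Set X} {f : X → X}

/-! ### Order-preserving subhomogeneous maps -/

/-- Continuous, order-preserving, subhomogeneous self-maps of the interior of a closed normal
cone such that the cone is regular or the map is condensing. -/
structure IsSubhomMap (C : Set X) (f : X → X) : Prop where
  cone : IsClosedCone C
  normal : IsNormalCone C
  mapsTo : Set.MapsTo f (interior C) (interior C)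
  cont : ContinuousOn f (interior C)
  mono : OrderPreservingOn C f (interior C)
  sub : SubhomogeneousOn C f (interior C)
  cond : IsRegularCone C ∨ GammaCondensing f (interior C) ∨ TauCondensing C f (interior C)

theorem iterate_mono_of_orderPreserving {g : X → X}
    (hg : Set.MapsTo g (interior C) (interior C)) (hop : OrderPreservingOn C g (interior C))
    {x y : X} (hx : x ∈ interior C) (hy : y ∈ interior C) (h : y - x ∈ C) (n : ℕ) :
    g^[n] y - g^[n] x ∈ C := by
  induction n with
  | zero => exact h
  | succ n ih =>
    rw [Function.iterate_succ_apply', Function.iterate_succ_apply']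
    exact hop _ (hg.iterate n hx) _ (hg.iterate n hy) ih

namespace IsSubhomMap

theorem mapsTo_affine (F : IsSubhomMap C f) {c : ℝ} (hc : 0 < c) {w : X} (hw : w ∈ C) :
    Set.MapsTo (fun z => c • f z + w) (interior C) (interior C) := fun _ hx =>
  F.cone.add_mem_interior (F.cone.smul_mem_interior hc (F.mapsTo hx)) hw

theorem mono_affine (F : IsSubhomMap C f) {c : ℝ} (hc : 0 < c) (w : X) :
    OrderPreservingOn C (fun z => c • f z + w) (interior C) := fun x hx y hy h => by
  have := F.cone.smul_le_smul hc.le (F.mono x hx y hy h)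
  simpa using this

theorem sub_of_le_one (F : IsSubhomMap C f) {t : ℝ} (h0 : 0 < t) (h1 : t ≤ 1) {x : X}
    (hx : x ∈ interior C) : f (t • x) - t • f x ∈ C := by
  have h := F.sub t⁻¹ ((one_le_inv₀ h0).2 h1) (t • x) (F.cone.smul_mem_interior h0 hx)
  rw [smul_smul, inv_mul_cancel₀ h0.ne', one_smul] at h
  have := F.cone.smul_mem h0.le h
  rwa [smul_sub, smul_smul, mul_inv_cancel₀ h0.ne', one_smul] at this

theorem affine_orbit_up (F : IsSubhomMap C f) [CompleteSpace X] {c : ℝ} (hc0 : 0 < c)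
    (hc1 : c ≤ 1) {w : X} (hw : w ∈ C) {x b : X} (hx : x ∈ interior C)
    (h : c • f x + w - x ∈ C) (hb : ∀ n, b - (fun z => c • f z + w)^[n] x ∈ C) :
    ∃ l ∈ interior C, Tendsto (fun n => (fun z => c • f z + w)^[n] x) atTop (𝓝 l) ∧
      c • f l + w = l ∧ l - x ∈ C ∧ b - l ∈ C := by
  have hg := F.mapsTo_affine hc0 hw
  have hinc : ∀ n, (fun z => c • f z + w)^[n + 1] x - (fun z => c • f z + w)^[n] x ∈ C :=
    fun n => iterate_mono_of_orderPreserving hg (F.mono_affine hc0 w) hx (hg hx) h n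
  refine tendsto_fixed_of_monotone F.cone F.normal F.mapsTo F.cont F.mono F.cond hc0 hc1 hw hx
    (fun n => ?_) hb (fun n => Function.iterate_succ_apply' _ _ _) (Or.inl hinc)
  induction n with
  | zero => exact F.cone.le_rfl x
  | succ n ih => exact F.cone.le_trans ih (hinc n)

theorem affine_orbit_down (F : IsSubhomMap C f) [CompleteSpace X] {c : ℝ} (hc0 : 0 < c)
    (hc1 : c ≤ 1) {w : X} (hw : w ∈ C) {x a : X} (hx : x ∈ interior C) (ha : a ∈ interior C)
    (h : x - (c • f x + w) ∈ C) (hb : ∀ n, (fun z => c • f z + w)^[n] x - a ∈ C) :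
    ∃ l ∈ interior C, Tendsto (fun n => (fun z => c • f z + w)^[n] x) atTop (𝓝 l) ∧
      c • f l + w = l ∧ l - a ∈ C ∧ x - l ∈ C := by
  have hg := F.mapsTo_affine hc0 hw
  have hdec : ∀ n, (fun z => c • f z + w)^[n] x - (fun z => c • f z + w)^[n + 1] x ∈ C :=
    fun n => iterate_mono_of_orderPreserving hg (F.mono_affine hc0 w) (hg hx) hx h n
  refine tendsto_fixed_of_monotone F.cone F.normal F.mapsTo F.cont F.mono F.cond hc0 hc1 hw ha
    hb (fun n => ?_) (fun n => Function.iterate_succ_apply' _ _ _) (Or.inr hdec)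
  induction n with
  | zero => exact F.cone.le_rfl x
  | succ n ih => exact F.cone.le_trans (hdec n) ih

theorem orbit_up (F : IsSubhomMap C f) [CompleteSpace X] {x b : X} (hx : x ∈ interior C)
    (h : f x - x ∈ C) (hb : ∀ n, b - f^[n] x ∈ C) :
    ∃ l ∈ interior C, Tendsto (fun n => f^[n] x) atTop (𝓝 l) ∧ f l = l ∧ l - x ∈ C ∧
      b - l ∈ C := by
  have := F.affine_orbit_up one_pos le_rfl F.cone.zero_mem (x := x) (b := b) hx
  simp only [one_smul, add_zero] at this
  exact this h hb

theorem orbit_down (F : IsSubhomMap C f) [CompleteSpace X] {x a : X} (hx : x ∈ interior C)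
    (ha : a ∈ interior C) (h : x - f x ∈ C) (hb : ∀ n, f^[n] x - a ∈ C) :
    ∃ l ∈ interior C, Tendsto (fun n => f^[n] x) atTop (𝓝 l) ∧ f l = l ∧ l - a ∈ C ∧
      x - l ∈ C := by
  have := F.affine_orbit_down one_pos le_rfl F.cone.zero_mem (x := x) (a := a) hx ha
  simp only [one_smul, add_zero] at this
  exact this h hb

theorem smul_fixed_down (F : IsSubhomMap C f) {u : X} (hu : u ∈ interior C) (hfu : f u = u)
    {t : ℝ} (ht : 1 ≤ t) : t • u - f (t • u) ∈ C := by
  have := F.sub t ht u hu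
  rwa [hfu] at this

theorem smul_fixed_up (F : IsSubhomMap C f) {u : X} (hu : u ∈ interior C) (hfu : f u = u)
    {t : ℝ} (h0 : 0 < t) (h1 : t ≤ 1) : f (t • u) - t • u ∈ C := by
  have := F.sub_of_le_one h0 h1 hu
  rwa [hfu] at this

theorem ray_down (F : IsSubhomMap C f) [CompleteSpace X] {u : X} (hu : u ∈ interior C)
    (hfu : f u = u) {t : ℝ} (ht : 1 ≤ t) :
    ∃ l ∈ interior C, Tendsto (fun n => f^[n] (t • u)) atTop (𝓝 l) ∧ f l = l := by
  have htu : t • u ∈ interior C := F.cone.smul_mem_interior (by linarith) hu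
  have hle : t • u - u ∈ C := by
    simpa using F.cone.smul_le_smul_left ht (interior_subset hu)
  obtain ⟨l, h1, h2, h3, -⟩ := F.orbit_down htu hu (F.smul_fixed_down hu hfu ht) fun n => by
    have := iterate_mono_of_orderPreserving F.mapsTo F.mono hu htu hle n
    rwa [Function.iterate_fixed hfu] at this
  exact ⟨l, h1, h2, h3⟩

theorem ray_up (F : IsSubhomMap C f) [CompleteSpace X] {u : X} (hu : u ∈ interior C)
    (hfu : f u = u) {t : ℝ} (h0 : 0 < t) (ht : t ≤ 1) :
    ∃ l ∈ interior C, Tendsto (fun n => f^[n] (t • u)) atTop (𝓝 l) ∧ f l = l := by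
  have htu : t • u ∈ interior C := F.cone.smul_mem_interior h0 hu
  have hle : u - t • u ∈ C := by
    simpa using F.cone.smul_le_smul_left ht (interior_subset hu)
  obtain ⟨l, h1, h2, h3, -⟩ := F.orbit_up (b := u) htu (F.smul_fixed_up hu hfu h0 ht) fun n => by
    have := iterate_mono_of_orderPreserving F.mapsTo F.mono htu hu hle n
    rwa [Function.iterate_fixed hfu] at this
  exact ⟨l, h1, h2, h3⟩

/-! ### Bounded fixed point sets and strict sub- and supersolutions -/

/-- A fixed point dominates every `x` with `x ≪ f x`: if `t < 1` were the largest scalar with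
`t • x ≤ z`, applying `f` would improve it. -/
theorem le_fixed (F : IsSubhomMap C f) {x z : X} (hx : x ∈ interior C)
    (hfx : f x - x ∈ interior C) (hz : z ∈ interior C) (hfz : f z = z) : z - x ∈ C := by
  obtain ⟨N, hN, hNz⟩ := F.cone.exists_le_smul hz x
  obtain ⟨e, he, he1, hex⟩ := exists_pos_sub_smul_mem hfx x
  set S : Set ℝ := {t | t ∈ Set.Icc N⁻¹ 1 ∧ z - t • x ∈ C} with hS
  have hScl : IsClosed S :=
    isClosed_Icc.inter (F.cone.1.preimage (by fun_prop : Continuous fun t : ℝ => z - t • x))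
  have hN0 : 0 < N := by linarith
  have hSne : S.Nonempty := ⟨N⁻¹, ⟨le_rfl, inv_le_one_of_one_le₀ hN⟩, F.cone.inv_smul_le hN0 hNz⟩
  have hSb : BddAbove S := ⟨1, fun t ht => ht.1.2⟩
  obtain ⟨⟨ht0, ht1⟩, htz⟩ := hScl.csSup_mem hSne hSb
  set t := sSup S
  have htpos : 0 < t := (inv_pos.2 hN0).trans_le ht0
  have h1 : z - t • f x ∈ C := by
    have h2 := F.mono _ (F.cone.smul_mem_interior htpos hx) z hz htz
    rw [hfz] at h2
    exact F.cone.le_trans (F.sub_of_le_one htpos ht1 hx) h2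
  have h3 : z - (t * (1 + e)) • x ∈ C := by
    have := F.cone.add_mem h1 (F.cone.smul_mem htpos.le hex)
    convert this using 1
    module
  have h4 : z - (min 1 (t * (1 + e))) • x ∈ C :=
    F.cone.le_trans (F.cone.smul_le_smul_left (min_le_right _ _) (interior_subset hx)) h3
  have h5 : min 1 (t * (1 + e)) ∈ S :=
    ⟨⟨le_min (ht0.trans ht1) (by nlinarith), min_le_left _ _⟩, h4⟩
  have h6 := le_csSup hSb h5
  rcases min_le_iff.1 h6 with h | h
  · have : t = 1 := le_antisymm ht1 h
    rw [this, one_smul] at htz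
    exact htz
  · nlinarith

/-- A fixed point is dominated by every `y` with `f y ≪ y`. -/
theorem fixed_le (F : IsSubhomMap C f) {y z : X} (hy : y ∈ interior C)
    (hfy : y - f y ∈ interior C) (hz : z ∈ interior C) (hfz : f z = z) : y - z ∈ C := by
  obtain ⟨N, hN, hNz⟩ := F.cone.exists_le_smul hy z
  obtain ⟨e, he, he1, hex⟩ := exists_pos_sub_smul_mem hfy y
  set S : Set ℝ := {t | t ∈ Set.Icc 1 N ∧ t • y - z ∈ C} with hS
  have hScl : IsClosed S :=
    isClosed_Icc.inter (F.cone.1.preimage (by fun_prop : Continuous fun t : ℝ => t • y - z))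
  have hSne : S.Nonempty := ⟨N, ⟨hN, le_rfl⟩, hNz⟩
  have hSb : BddBelow S := ⟨1, fun t ht => ht.1.1⟩
  obtain ⟨⟨ht0, ht1⟩, htz⟩ := hScl.csInf_mem hSne hSb
  set t := sInf S
  have htpos : 0 < t := by linarith
  have h1 : t • f y - z ∈ C := by
    have h2 := F.mono z hz _ (F.cone.smul_mem_interior htpos hy) htz
    rw [hfz] at h2
    exact F.cone.le_trans h2 (F.sub t ht0 y hy)
  have h3 : (t * (1 - e)) • y - z ∈ C := by
    have := F.cone.add_mem h1 (F.cone.smul_mem htpos.le hex)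
    convert this using 1
    module
  have h4 : (max 1 (t * (1 - e))) • y - z ∈ C :=
    F.cone.le_trans h3 (F.cone.smul_le_smul_left (le_max_right _ _) (interior_subset hy))
  have h5 : max 1 (t * (1 - e)) ∈ S :=
    ⟨⟨le_max_left _ _, max_le (ht0.trans ht1) (by nlinarith)⟩, h4⟩
  have h6 := csInf_le hSb h5
  rcases le_max_iff.1 h6 with h | h
  · have : t = 1 := le_antisymm h ht0
    rw [this, one_smul] at htz
    exact htz
  · nlinarith

theorem fixed_bounded_of_strict (F : IsSubhomMap C f) [CompleteSpace X]
    (h1 : ∃ x ∈ interior C, f x - x ∈ interior C) (h2 : ∃ y ∈ interior C, y - f y ∈ interior C) :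
    {x ∈ interior C | f x = x}.Nonempty ∧ TBounded C {x ∈ interior C | f x = x} := by
  obtain ⟨x, hx, hfx⟩ := h1
  obtain ⟨y, hy, hfy⟩ := h2
  refine ⟨?_, F.cone.tBounded_of_le hx (fun z hz => F.le_fixed hx hfx hz.1 hz.2)
    (fun z hz => F.fixed_le hy hfy hz.1 hz.2)⟩
  -- `f` maps the order interval from `x` to `N • y` into itself
  obtain ⟨N, hN, hNx⟩ := F.cone.exists_le_smul hy x
  have hN0 : 0 < N := by linarith
  have hNy : N • y ∈ interior C := F.cone.smul_mem_interior hN0 hy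
  have hfNy : N • y - f (N • y) ∈ C :=
    F.cone.le_trans (F.sub N hN y hy) (F.cone.smul_le_smul hN0.le (interior_subset hfy))
  have hub : ∀ n, N • y - f^[n] x ∈ C := by
    intro n
    induction n with
    | zero => exact hNx
    | succ n ih =>
      rw [Function.iterate_succ_apply']
      exact F.cone.le_trans (F.mono _ (F.mapsTo.iterate n hx) _ hNy ih) hfNy
  obtain ⟨l, hl, -, hfl, -⟩ := F.orbit_up hx (interior_subset hfx) hub
  exact ⟨l, hl, hfl⟩

/-- Iterates depend continuously on an affine perturbation of the map. -/
theorem tendsto_perturbed_iterate (F : IsSubhomMap C f) {c : ℝ → ℝ} {w : ℝ → X}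
    (hc : Tendsto c (𝓝[>] 0) (𝓝 1)) (hw : Tendsto w (𝓝[>] 0) (𝓝 0)) {v : X}
    (hv : v ∈ interior C) (k : ℕ) :
    Tendsto (fun e => (fun z => c e • f z + w e)^[k] v) (𝓝[>] 0) (𝓝 (f^[k] v)) := by
  induction k with
  | zero => exact tendsto_const_nhds
  | succ k ih =>
    simp only [Function.iterate_succ_apply']
    have hk : f^[k] v ∈ interior C := F.mapsTo.iterate k hv
    have h1 := (F.cont.continuousAt (isOpen_interior.mem_nhds hk)).tendsto.comp ih
    have h2 := (hc.smul h1).add hw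
    rw [one_smul, add_zero] at h2
    exact h2

/-- If the fixed points are bounded above by `M • u`, then `f y ≪ y` for some `y`. The orbit of
`v = (M + 1) • u` ends up strictly below `v`; this persists for `g = f + e • u`, whose increasing
orbit of `u` is then bounded by `v` and converges to a fixed point of `g`. -/
theorem exists_strict_super (F : IsSubhomMap C f) [CompleteSpace X] {u : X}
    (hu : u ∈ interior C) (hfu : f u = u) {M : ℝ} (hM : 1 ≤ M)
    (hfix : ∀ z ∈ interior C, f z = z → M • u - z ∈ C) :
    ∃ y ∈ interior C, y - f y ∈ interior C := by
  set v := (M + 1) • u with hvdef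
  have hv : v ∈ interior C := F.cone.smul_mem_interior (by linarith) hu
  have huv : v - u ∈ C := by
    simpa using F.cone.smul_le_smul_left (show 1 ≤ M + 1 by linarith) (interior_subset hu)
  obtain ⟨l, hl, hlim, hfl⟩ := F.ray_down hu hfu (show 1 ≤ M + 1 by linarith)
  have hvl : v - l ∈ interior C := by
    have := F.cone.add_mem_interior hu (hfix l hl hfl)
    convert this using 1
    rw [hvdef]; module
  obtain ⟨k, hk, hk1⟩ := (((hlim.const_sub v).eventually (isOpen_interior.mem_nhds hvl)).and
    (eventually_ge_atTop 1)).exists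
  have hw : Tendsto (fun e : ℝ => e • u) (𝓝[>] 0) (𝓝 0) := by
    have : ContinuousAt (fun e : ℝ => e • u) 0 := by fun_prop
    have := this.tendsto
    rw [zero_smul] at this
    exact this.mono_left nhdsWithin_le_nhds
  have hper := F.tendsto_perturbed_iterate (c := fun _ => 1) tendsto_const_nhds hw hv k
  obtain ⟨e, hek, he⟩ := (((hper.const_sub v).eventually (isOpen_interior.mem_nhds hk)).and
    self_mem_nhdsWithin).exists
  have he0 : 0 < e := he
  have hwC : e • u ∈ C := F.cone.smul_mem he0.le (interior_subset hu)
  set g : X → X := fun z => (1 : ℝ) • f z + e • u with hg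
  have hgm : Set.MapsTo g (interior C) (interior C) := F.mapsTo_affine one_pos hwC
  have hgo : OrderPreservingOn C g (interior C) := F.mono_affine one_pos _
  have hgu : g u - u ∈ C := by simpa [hg, hfu] using hwC
  have hinc : ∀ n m, n ≤ m → g^[m] u - g^[n] u ∈ C := by
    intro n m hnm
    induction m, hnm using Nat.le_induction with
    | base => exact F.cone.le_rfl _
    | succ m _ ih =>
      exact F.cone.le_trans ih (iterate_mono_of_orderPreserving hgm hgo hu (hgm hu) hgu m)
  have hvk : ∀ j, v - (g^[k])^[j] v ∈ C := by
    intro j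
    induction j with
    | zero => exact F.cone.le_rfl _
    | succ j ih =>
      rw [Function.iterate_succ_apply']
      exact F.cone.le_trans (iterate_mono_of_orderPreserving hgm hgo
        ((hgm.iterate k).iterate j hv) hv ih k) (interior_subset hek)
  have hub : ∀ n, v - g^[n] u ∈ C := fun n => by
    refine F.cone.le_trans (hinc n (k * n) (Nat.le_mul_of_pos_left n hk1)) ?_
    refine F.cone.le_trans (iterate_mono_of_orderPreserving hgm hgo hu hv huv (k * n)) ?_
    rw [Function.iterate_mul]
    exact hvk n
  obtain ⟨y, hy, -, hfy, -⟩ := F.affine_orbit_up one_pos le_rfl hwC hu hgu hub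
  refine ⟨y, hy, ?_⟩
  have : y - f y = e • u := by
    rw [one_smul] at hfy
    nth_rewrite 1 [← hfy]
    abel
  rw [this]
  exact F.cone.smul_mem_interior he0 hu

/-- If `u` is bounded above by `M • z` for all fixed points `z`, then `x ≪ f x` for some `x`. This
is dual to `exists_strict_super`, with the perturbation `(1 - e) • f` in place of `f + e • u`. -/
theorem exists_strict_sub (F : IsSubhomMap C f) [CompleteSpace X] {u : X}
    (hu : u ∈ interior C) (hfu : f u = u) {M : ℝ} (hM : 1 ≤ M)
    (hfix : ∀ z ∈ interior C, f z = z → M • z - u ∈ C) :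
    ∃ x ∈ interior C, f x - x ∈ interior C := by
  have hM0 : 0 < M := by linarith
  have hM1 : 0 < M + 1 := by linarith
  have hlt : (M + 1)⁻¹ < M⁻¹ := by gcongr; linarith
  have hle1 : (M + 1)⁻¹ ≤ 1 := inv_le_one_of_one_le₀ (by linarith)
  set v := (M + 1)⁻¹ • u with hvdef
  have hv : v ∈ interior C := F.cone.smul_mem_interior (inv_pos.2 hM1) hu
  have huv : u - v ∈ C := by
    simpa using F.cone.smul_le_smul_left hle1 (interior_subset hu)
  obtain ⟨l, hl, hlim, hfl⟩ := F.ray_up hu hfu (inv_pos.2 hM1) hle1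
  have hvl : l - v ∈ interior C := by
    have h1 : (M⁻¹ - (M + 1)⁻¹) • u ∈ interior C :=
      F.cone.smul_mem_interior (sub_pos.2 hlt) hu
    have := F.cone.add_mem_interior h1 (F.cone.inv_smul_le hM0 (hfix l hl hfl))
    convert this using 1
    rw [hvdef]; module
  obtain ⟨k, hk, hk1⟩ := (((hlim.sub_const v).eventually (isOpen_interior.mem_nhds hvl)).and
    (eventually_ge_atTop 1)).exists
  have hc : Tendsto (fun e : ℝ => 1 - e) (𝓝[>] 0) (𝓝 1) := by
    have : ContinuousAt (fun e : ℝ => 1 - e) 0 := by fun_prop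
    have := this.tendsto
    rw [sub_zero] at this
    exact this.mono_left nhdsWithin_le_nhds
  have hper := F.tendsto_perturbed_iterate (w := fun _ => 0) hc tendsto_const_nhds hv k
  obtain ⟨e, hek, he0, he1⟩ := (((hper.sub_const v).eventually (isOpen_interior.mem_nhds hk)).and
    (Ioo_mem_nhdsGT one_pos)).exists
  have hc0 : 0 < 1 - e := by linarith
  have hwC : (0 : X) ∈ C := F.cone.zero_mem
  set g : X → X := fun z => (1 - e) • f z + 0 with hg
  have hgm : Set.MapsTo g (interior C) (interior C) := F.mapsTo_affine hc0 hwC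
  have hgo : OrderPreservingOn C g (interior C) := F.mono_affine hc0 _
  have hgu : u - g u ∈ C := by
    have := F.cone.smul_mem he0.le (interior_subset hu)
    convert this using 1
    rw [hg]; simp only [hfu]; module
  have hdec : ∀ n m, n ≤ m → g^[n] u - g^[m] u ∈ C := by
    intro n m hnm
    induction m, hnm using Nat.le_induction with
    | base => exact F.cone.le_rfl _
    | succ m _ ih =>
      exact F.cone.le_trans (iterate_mono_of_orderPreserving hgm hgo (hgm hu) hu hgu m) ih
  have hvk : ∀ j, (g^[k])^[j] v - v ∈ C := by
    intro j
    induction j with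
    | zero => exact F.cone.le_rfl _
    | succ j ih =>
      rw [Function.iterate_succ_apply']
      exact F.cone.le_trans (interior_subset hek) (iterate_mono_of_orderPreserving hgm hgo
        hv ((hgm.iterate k).iterate j hv) ih k)
  have hlb : ∀ n, g^[n] u - v ∈ C := fun n => by
    refine F.cone.le_trans ?_ (hdec n (k * n) (Nat.le_mul_of_pos_left n hk1))
    refine F.cone.le_trans ?_ (iterate_mono_of_orderPreserving hgm hgo hv hu huv (k * n))
    rw [Function.iterate_mul]
    exact hvk n
  obtain ⟨x, hx, -, hfx, -⟩ := F.affine_orbit_down hc0 (by linarith) hwC hu hv hgu hlb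
  refine ⟨x, hx, ?_⟩
  have : f x - x = e • f x := by
    nth_rewrite 2 [← hfx]
    module
  rw [this]
  exact F.cone.smul_mem_interior he0 (F.mapsTo hx)

theorem exists_bound (F : IsSubhomMap C f) {u : X} (hu : u ∈ interior C) (hfu : f u = u)
    (hb : TBounded C {x ∈ interior C | f x = x}) :
    ∃ M : ℝ, 1 ≤ M ∧ ∀ z ∈ interior C, f z = z → M • u - z ∈ C ∧ M • z - u ∈ C := by
  obtain ⟨d, hd⟩ := hb
  have key : ∀ z ∈ interior C, f z = z → _ := fun z hz hfz =>
    F.cone.le_smul_of_thompsonDist_lt hu hz ((hd u ⟨hu, hfu⟩ z ⟨hz, hfz⟩).trans_lt (lt_add_one d))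
  exact ⟨_, (key u hu hfu).1, fun z hz hfz => ⟨(key z hz hfz).2.2, (key z hz hfz).2.1⟩⟩

end IsSubhomMap

/-! ### Uniqueness from analyticity -/

/-- A boundary point of the cone is annihilated by a functional that is nonnegative on the cone
and positive on its interior. -/
theorem IsClosedCone.exists_support (hC : IsClosedCone C) (hne : (interior C).Nonempty) {x : X}
    (hx : x ∈ C) (hxi : x ∉ interior C) :
    ∃ φ : X →L[ℝ] ℝ, φ x = 0 ∧ (∀ a ∈ C, 0 ≤ φ a) ∧ ∀ a ∈ interior C, 0 < φ a := by
  obtain ⟨u, hu⟩ := hne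
  obtain ⟨ψ, hψ⟩ := geometric_hahn_banach_open_point hC.2.1.interior isOpen_interior hxi
  have hlim : ∀ a ∈ C, ψ a ≤ ψ x := by
    intro a ha
    have h1 : Tendsto (fun e : ℝ => ψ (e • u + a)) (𝓝[>] 0) (𝓝 (ψ a)) := by
      have : ContinuousAt (fun e : ℝ => ψ (e • u + a)) 0 := by fun_prop
      have := this.tendsto
      rw [zero_smul, zero_add] at this
      exact this.mono_left nhdsWithin_le_nhds
    refine le_of_tendsto h1 ?_
    filter_upwards [self_mem_nhdsWithin] with e he
    exact (hψ _ (hC.add_mem_interior (hC.smul_mem_interior he hu) ha)).le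
  have h0 : ψ x = 0 := by
    have h1 := hlim 0 hC.zero_mem
    have h2 := hlim _ (hC.smul_mem (c := 2) (by norm_num) hx)
    simp only [map_zero, map_smul, smul_eq_mul] at h1 h2
    linarith
  refine ⟨-ψ, by simp [h0], fun a ha => ?_, fun a ha => ?_⟩
  · have := hlim a ha
    simp only [neg_apply]; linarith
  · have := hψ a ha
    simp only [neg_apply]; linarith

theorem analyticOnNhd_iterate (hf : Set.MapsTo f (interior C) (interior C))
    (han : AnalyticOnNhd ℝ f (interior C)) (k : ℕ) : AnalyticOnNhd ℝ (f^[k]) (interior C) := by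
  induction k with
  | zero => exact fun x _ => analyticAt_id
  | succ k ih =>
    rw [Function.iterate_succ']
    exact han.comp ih (hf.iterate k)

namespace IsSubhomMap

theorem iterate_sub (F : IsSubhomMap C f) {t : ℝ} (ht : 1 ≤ t) {x : X} (hx : x ∈ interior C)
    (k : ℕ) : t • f^[k] x - f^[k] (t • x) ∈ C := by
  have ht0 : 0 < t := by linarith
  induction k with
  | zero => exact F.cone.le_rfl _
  | succ k ih =>
    rw [Function.iterate_succ_apply', Function.iterate_succ_apply']
    have hk := F.mapsTo.iterate k hx
    exact F.cone.le_trans (F.mono _ (F.mapsTo.iterate k (F.cone.smul_mem_interior ht0 hx)) _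
      (F.cone.smul_mem_interior ht0 hk) ih) (F.sub t ht _ hk)

/-- A fixed point `p` whose multiple `M • p` dominates all fixed points dominates them without
the factor. Otherwise let `β > 1` be least with `q ≤ β • p` and let `φ` support `C` at
`β • p - q`. Then `φ (f^[k] (t • p)) / t` is nonincreasing and takes the value `φ p` at `t = 1` and
`t = β`, so `φ (f^[k] (t • p)) = t * φ p` for all `t > 0` by analyticity, whereas
`f^[k] (t • p)` converges to a fixed point, hence below `M • p`, also for `t > M`. -/
theorem fixed_le_of_analytic (F : IsSubhomMap C f) [CompleteSpace X]
    (han : AnalyticOnNhd ℝ f (interior C)) {p q : X} (hp : p ∈ interior C) (hfp : f p = p)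
    (hq : q ∈ interior C) (hfq : f q = q) {M : ℝ} (hM : 1 ≤ M)
    (hfix : ∀ z ∈ interior C, f z = z → M • p - z ∈ C) : p - q ∈ C := by
  by_contra hpq
  set S : Set ℝ := {t | 1 ≤ t ∧ t • p - q ∈ C} with hS
  have hScl : IsClosed S :=
    isClosed_Ici.inter (F.cone.1.preimage (by fun_prop : Continuous fun t : ℝ => t • p - q))
  have hSne : S.Nonempty := ⟨M, hM, hfix q hq hfq⟩
  have hSb : BddBelow S := ⟨1, fun t ht => ht.1⟩
  obtain ⟨hb1, hbq⟩ := hScl.csInf_mem hSne hSb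
  set β := sInf S with hβ
  have hb1' : 1 < β := lt_of_le_of_ne hb1 fun h => hpq (by rw [← h, one_smul] at hbq; exact hbq)
  have hni : β • p - q ∉ interior C := by
    intro hi
    obtain ⟨e, he, -, h⟩ := exists_pos_sub_smul_mem hi p
    have h1 : (β - e) • p - q ∈ C := by convert h using 1; module
    have h2 : (max 1 (β - e)) • p - q ∈ C :=
      F.cone.le_trans h1 (F.cone.smul_le_smul_left (le_max_right _ _) (interior_subset hp))
    have h3 := csInf_le hSb (show max 1 (β - e) ∈ S from ⟨le_max_left _ _, h2⟩)
    rcases le_max_iff.1 h3 with h | h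
    · exact absurd h (not_le.2 hb1')
    · linarith
  obtain ⟨φ, hφ0, hφC, hφi⟩ := F.cone.exists_support ⟨p, hp⟩ hbq hni
  have hφp : 0 < φ p := hφi p hp
  have hφle : ∀ x y : X, y - x ∈ C → φ x ≤ φ y := fun x y h => by
    have := hφC _ h
    rw [map_sub] at this
    linarith
  have hφq : φ q = β * φ p := by
    rw [map_sub, map_smul, smul_eq_mul] at hφ0
    linarith
  have hβ0 : 0 < β := by linarith
  -- on `[1, β]` the two monotonicity properties pinch `φ (f^[k] (t • p))`
  have hpinch : ∀ k : ℕ, ∀ t ∈ Set.Icc 1 β, φ (f^[k] (t • p)) = t * φ p := by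
    rintro k t ⟨ht1, htβ⟩
    have ht0 : 0 < t := by linarith
    have htp := F.cone.smul_mem_interior ht0 hp
    apply le_antisymm
    · have h := hφle _ _ (F.iterate_sub ht1 hp k)
      rwa [Function.iterate_fixed hfp, map_smul, smul_eq_mul] at h
    · have h1 := hφle _ _ (F.iterate_sub (t := β / t) ((one_le_div ht0).2 htβ) htp k)
      rw [smul_smul, div_mul_cancel₀ _ ht0.ne', map_smul, smul_eq_mul] at h1
      have h2 := hφle _ _ (iterate_mono_of_orderPreserving F.mapsTo F.mono hq
        (F.cone.smul_mem_interior hβ0 hp) hbq k)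
      rw [Function.iterate_fixed hfq, hφq] at h2
      have h3 := h2.trans h1
      rw [div_mul_eq_mul_div, le_div_iff₀ ht0] at h3
      nlinarith
  have hall : ∀ k : ℕ, ∀ t : ℝ, 0 < t → φ (f^[k] (t • p)) = t * φ p := by
    intro k
    have han1 : AnalyticOnNhd ℝ (fun t : ℝ => φ (f^[k] (t • p))) (Set.Ioi 0) := by
      intro t ht
      have h1 : AnalyticAt ℝ (fun t : ℝ => t • p) t := by fun_prop
      have h2 := analyticOnNhd_iterate F.mapsTo han k (t • p) (F.cone.smul_mem_interior ht hp)
      exact (φ.analyticAt _).comp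
        (AnalyticAt.comp (g := f^[k]) (f := fun t : ℝ => t • p) (x := t) h2 h1)
    have han2 : AnalyticOnNhd ℝ (fun t : ℝ => t * φ p) (Set.Ioi 0) := by
      intro t _
      fun_prop
    have hmid : (1 + β) / 2 ∈ Set.Ioo 1 β := ⟨by linarith, by linarith⟩
    have hev : (fun t : ℝ => φ (f^[k] (t • p))) =ᶠ[𝓝 ((1 + β) / 2)] fun t => t * φ p := by
      filter_upwards [isOpen_Ioo.mem_nhds hmid] with t ht
      exact hpinch k t ⟨ht.1.le, ht.2.le⟩
    exact fun t ht => han1.eqOn_of_preconnected_of_eventuallyEq han2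
      (convex_Ioi (0 : ℝ)).isPreconnected (by simp only [Set.mem_Ioi]; linarith) hev ht
  obtain ⟨l, hl, hlim, hfl⟩ := F.ray_down hp hfp (show 1 ≤ M + 1 by linarith)
  have h1 : Tendsto (fun n => φ (f^[n] ((M + 1) • p))) atTop (𝓝 (φ l)) :=
    (φ.continuous.tendsto l).comp hlim
  simp only [hall _ _ (show 0 < M + 1 by linarith)] at h1
  have h2 := tendsto_nhds_unique h1 tendsto_const_nhds
  have h3 := hφle _ _ (hfix l hl hfl)
  rw [map_smul, smul_eq_mul] at h3
  linarith

theorem fixed_unique (F : IsSubhomMap C f) [CompleteSpace X]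
    (han : AnalyticOnNhd ℝ f (interior C)) (hb : TBounded C {x ∈ interior C | f x = x})
    {p q : X} (hp : p ∈ interior C) (hfp : f p = p) (hq : q ∈ interior C) (hfq : f q = q) :
    q = p := by
  obtain ⟨M, hM, hMp⟩ := F.exists_bound hp hfp hb
  obtain ⟨N, hN, hNq⟩ := F.exists_bound hq hfq hb
  exact F.cone.le_antisymm
    (F.fixed_le_of_analytic han hp hfp hq hfq hM fun z hz hfz => (hMp z hz hfz).1)
    (F.fixed_le_of_analytic han hq hfq hp hfp hN fun z hz hfz => (hNq z hz hfz).1)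

/-- A unique fixed point attracts all orbits: each of them is squeezed between two orbits that
start on the ray through the fixed point. -/
theorem tendsto_of_unique (F : IsSubhomMap C f) [CompleteSpace X] {u : X}
    (hu : u ∈ interior C) (hfu : f u = u) (huniq : ∀ y ∈ interior C, f y = y → y = u) {x : X}
    (hx : x ∈ interior C) : Tendsto (fun k : ℕ => f^[k] x) atTop (𝓝 u) := by
  obtain ⟨M, hM, hMx⟩ := F.cone.exists_le_smul hu x
  obtain ⟨N, hN, hNu⟩ := F.cone.exists_le_smul hx u
  have hN0 : 0 < N := by linarith
  obtain ⟨l, hl, hl1, hl2⟩ := F.ray_down hu hfu hM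
  obtain ⟨m, hm, hm1, hm2⟩ := F.ray_up hu hfu (inv_pos.2 hN0) (inv_le_one_of_one_le₀ hN)
  rw [huniq l hl hl2] at hl1
  rw [huniq m hm hm2] at hm1
  refine F.normal.squeeze hm1 hl1 (fun n => ?_) (fun n => ?_)
  · exact iterate_mono_of_orderPreserving F.mapsTo F.mono
      (F.cone.smul_mem_interior (inv_pos.2 hN0) hu) hx (F.cone.inv_smul_le hN0 hNu) n
  · exact iterate_mono_of_orderPreserving F.mapsTo F.mono hx
      (F.cone.smul_mem_interior (by linarith) hu) hMx n

end IsSubhomMap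

/-! ### Collatz–Wielandt numbers -/

theorem one_lt_lowerCW_iff (hC : IsClosedCone C) :
    1 < lowerCW C f ↔ ∃ x ∈ interior C, f x - x ∈ interior C := by
  simp only [lowerCW, mratio, lt_iSup_iff, lt_sSup_iff]
  constructor
  · rintro ⟨x, hx, _, ⟨a, ha, rfl, h⟩, h1⟩
    rw [ENNReal.one_lt_ofReal] at h1
    refine ⟨x, hx, ?_⟩
    have := hC.add_mem_interior (hC.smul_mem_interior (sub_pos.2 h1) hx) h
    convert this using 1
    module
  · rintro ⟨x, hx, h⟩
    obtain ⟨e, he, -, h1⟩ := exists_pos_sub_smul_mem h x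
    refine ⟨x, hx, _, ⟨1 + e, by linarith, rfl, ?_⟩, ?_⟩
    · convert h1 using 1; module
    · rw [ENNReal.one_lt_ofReal]; linarith

theorem upperCW_lt_one_iff (hC : IsClosedCone C) :
    upperCW C f < 1 ↔ ∃ y ∈ interior C, y - f y ∈ interior C := by
  simp only [upperCW, Mratio, iInf_lt_iff, sInf_lt_iff]
  constructor
  · rintro ⟨x, hx, _, ⟨a, ha, rfl, h⟩, h1⟩
    rw [ENNReal.ofReal_lt_one] at h1
    refine ⟨x, hx, ?_⟩
    have := hC.add_mem_interior (hC.smul_mem_interior (sub_pos.2 h1) hx) h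
    convert this using 1
    module
  · rintro ⟨x, hx, h⟩
    obtain ⟨e, he, he1, h1⟩ := exists_pos_sub_smul_mem h x
    refine ⟨x, hx, _, ⟨1 - e, by linarith, rfl, ?_⟩, ?_⟩
    · convert h1 using 1; module
    · rw [ENNReal.ofReal_lt_one]; linarith

end Dynamics

/-- For a real analytic, order-preserving, subhomogeneous `f : int C → int C`
(with `C` regular or `f` `γ`- or `τ`-condensing), the following are equivalent:
(a) `Fix(f)` nonempty and `d_T`-bounded; (b) `∃ x, f x ≫ x` and `∃ y, f y ≪ y`;
(c) `λ(f) > 1` and `r(f) < 1`; (d) `f` has a unique fixed point in `int C`;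
(e) all orbits of `f` converge to a single point `u ∈ int C`. -/
theorem stmt17 {X : Type*} [NormedAddCommGroup X] [NormedSpace ℝ X] [CompleteSpace X]
    {C : Set X} (hC : IsClosedCone C) (hnorm : IsNormalCone C)
    (hne : (interior C).Nonempty) {f : X → X}
    (hf : Set.MapsTo f (interior C) (interior C))
    (han : AnalyticOnNhd ℝ f (interior C))
    (hop : OrderPreservingOn C f (interior C))
    (hsub : SubhomogeneousOn C f (interior C))
    (hcond : IsRegularCone C ∨ GammaCondensing f (interior C) ∨
      TauCondensing C f (interior C)) :
    ((({x ∈ interior C | f x = x}).Nonempty ∧ TBounded C {x ∈ interior C | f x = x}) ↔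
      ((∃ x ∈ interior C, f x - x ∈ interior C) ∧
        (∃ y ∈ interior C, y - f y ∈ interior C))) ∧
    (((∃ x ∈ interior C, f x - x ∈ interior C) ∧
        (∃ y ∈ interior C, y - f y ∈ interior C)) ↔
      (1 < lowerCW C f ∧ upperCW C f < 1)) ∧
    ((1 < lowerCW C f ∧ upperCW C f < 1) ↔
      (∃ x ∈ interior C, f x = x ∧ ∀ y ∈ interior C, f y = y → y = x)) ∧
    ((∃ x ∈ interior C, f x = x ∧ ∀ y ∈ interior C, f y = y → y = x) ↔
      (∃ u ∈ interior C, ∀ x ∈ interior C,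
        Tendsto (fun k : ℕ => f^[k] x) atTop (𝓝 u))) := by
  have F : IsSubhomMap C f := ⟨hC, hnorm, hf, han.continuousOn, hop, hsub, hcond⟩
  have hbc := (one_lt_lowerCW_iff (f := f) hC).and (upperCW_lt_one_iff (f := f) hC)
  have hab : (({x ∈ interior C | f x = x}).Nonempty ∧ TBounded C {x ∈ interior C | f x = x}) ↔
      ((∃ x ∈ interior C, f x - x ∈ interior C) ∧
        (∃ y ∈ interior C, y - f y ∈ interior C)) := by
    refine ⟨?_, fun h => F.fixed_bounded_of_strict h.1 h.2⟩
    rintro ⟨⟨u, hu, hfu⟩, hb⟩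
    obtain ⟨M, hM, hMu⟩ := F.exists_bound hu hfu hb
    exact ⟨F.exists_strict_sub hu hfu hM fun z hz hfz => (hMu z hz hfz).2,
      F.exists_strict_super hu hfu hM fun z hz hfz => (hMu z hz hfz).1⟩
  have had : (({x ∈ interior C | f x = x}).Nonempty ∧ TBounded C {x ∈ interior C | f x = x}) ↔
      (∃ x ∈ interior C, f x = x ∧ ∀ y ∈ interior C, f y = y → y = x) := by
    constructor
    · rintro ⟨⟨u, hu, hfu⟩, hb⟩
      exact ⟨u, hu, hfu, fun y hy hfy => F.fixed_unique han hb hu hfu hy hfy⟩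
    · rintro ⟨u, hu, hfu, huniq⟩
      refine ⟨⟨u, hu, hfu⟩, 0, fun x hx y hy => ?_⟩
      rw [huniq x hx.1 hx.2, huniq y hy.1 hy.2]
      exact hC.thompsonDist_self_le u
  refine ⟨hab, hbc.symm, hbc.trans (hab.symm.trans had), ?_, ?_⟩
  · rintro ⟨u, hu, hfu, huniq⟩
    exact ⟨u, hu, fun x hx => F.tendsto_of_unique hu hfu huniq hx⟩
  · rintro ⟨u, hu, hlim⟩
    refine ⟨u, hu, ?_, fun y hy hfy => ?_⟩
    · have h1 := (han u hu).continuousAt.tendsto.comp (hlim u hu)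
      have h2 := (hlim u hu).comp (tendsto_add_atTop_nat 1)
      refine tendsto_nhds_unique h1 (h2.congr fun n => ?_)
      exact Function.iterate_succ_apply' f n u
    · have h := hlim y hy
      simp only [Function.iterate_fixed hfy] at h
      exact tendsto_nhds_unique tendsto_const_nhds h
end

section
/- Let n₁, n₂ be finite index types and consider (n₁⊕n₂)-by-(n₁⊕n₂) complex matrices in block form. Let A₁₁ be a positive definite n₁-by-n₁ Hermitian matrix and set A = fromBlocks A₁₁ 0 0 0. For each t > 0 let B(t) be a positive semidefinite matrix such that B(t) → B(∞) as t → ∞ for some positive semidefinite B(∞), and such that tA + B(t) is positive definite for all t > 0 and A + B(∞) is positive definite. Then the bottom-right n₂-by-n₂ block B(∞)₂₂ of B(∞) is positive definite, and lim_{t→∞} (tA + B(t))⁻¹ = fromBlocks 0 0 0 (B(∞)₂₂)⁻¹. -/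
open Filter Topology Matrix
open scoped ComplexOrder

/-!
The idea is to rescale the first block column. With `D s = fromBlocks (s • 1) 0 0 1` one has
`(t • A + B t) * D t⁻¹ = A + B t * D t⁻¹`, which converges to
`A + B∞ * D 0 = fromBlocks A₁₁ B∞₁₂ 0 B∞₂₂`. This limit is block upper triangular with invertible
diagonal blocks, so inversion is continuous there, and
`(t • A + B t)⁻¹ = D t⁻¹ * (A + B t * D t⁻¹)⁻¹` tends to
`D 0 * (fromBlocks A₁₁ B∞₁₂ 0 B∞₂₂)⁻¹ = fromBlocks 0 0 0 B∞₂₂⁻¹`.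
Positive definiteness of `B∞₂₂` holds because it is a principal block of `A + B∞`.
-/

/-- The block diagonal matrix that multiplies the first block by `s` and fixes the second. -/
noncomputable def blockScale (n₁ n₂ : Type*) [DecidableEq n₁] [DecidableEq n₂] (s : ℝ) :
    Matrix (n₁ ⊕ n₂) (n₁ ⊕ n₂) ℂ :=
  Matrix.fromBlocks (s • 1) 0 0 1

lemma continuous_blockScale (n₁ n₂ : Type*) [DecidableEq n₁] [DecidableEq n₂] :
    Continuous (blockScale n₁ n₂) := by
  unfold blockScale
  exact Continuous.matrix_fromBlocks (by fun_prop) continuous_const continuous_const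
    continuous_const

lemma isUnit_blockScale {n₁ n₂ : Type*} [Fintype n₁] [Fintype n₂] [DecidableEq n₁]
    [DecidableEq n₂] {s : ℝ} (hs : s ≠ 0) : IsUnit (blockScale n₁ n₂ s).det := by
  simp [blockScale, ← Complex.coe_smul, hs]

/-- The inverse of `t • A + B` recovered from the column-rescaled matrix `A + B * D t⁻¹`. -/
lemma inv_eq_blockScale_mul {n₁ n₂ : Type*} [Fintype n₁] [Fintype n₂] [DecidableEq n₁]
    [DecidableEq n₂] (A₁₁ : Matrix n₁ n₁ ℂ) (B : Matrix (n₁ ⊕ n₂) (n₁ ⊕ n₂) ℂ) {t : ℝ}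
    (ht : t ≠ 0) :
    (t • Matrix.fromBlocks A₁₁ 0 0 0 + B)⁻¹ = blockScale n₁ n₂ t⁻¹ *
      (Matrix.fromBlocks A₁₁ 0 0 0 + B * blockScale n₁ n₂ t⁻¹)⁻¹ := by
  have h : Matrix.fromBlocks A₁₁ 0 0 0 + B * blockScale n₁ n₂ t⁻¹ =
      (t • Matrix.fromBlocks A₁₁ 0 0 0 + B) * blockScale n₁ n₂ t⁻¹ := by
    rw [add_mul]
    congr 1
    simp [blockScale, Matrix.fromBlocks_smul, Matrix.fromBlocks_multiply, smul_smul, ht]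
  rw [h, Matrix.mul_inv_rev, Matrix.mul_nonsing_inv_cancel_left _ _
    (isUnit_blockScale (inv_ne_zero ht))]

/-- Schur complement limit. If `A = fromBlocks A₁₁ 0 0 0` with `A₁₁` positive
definite, `B t` is positive semidefinite with `B t → B∞` as `t → ∞`, `t • A + B t` is positive
definite for all `t > 0`, and `A + B∞` is positive definite, then the bottom-right block
`B∞₂₂` is positive definite and `(t • A + B t)⁻¹ → fromBlocks 0 0 0 (B∞₂₂)⁻¹`. -/
theorem stmt18 {n₁ n₂ : Type*} [Fintype n₁] [Fintype n₂] [DecidableEq n₁] [DecidableEq n₂]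
    {A₁₁ : Matrix n₁ n₁ ℂ} (hA₁₁ : A₁₁.PosDef)
    (A : Matrix (n₁ ⊕ n₂) (n₁ ⊕ n₂) ℂ) (hA : A = Matrix.fromBlocks A₁₁ 0 0 0)
    (B : ℝ → Matrix (n₁ ⊕ n₂) (n₁ ⊕ n₂) ℂ) (Binf : Matrix (n₁ ⊕ n₂) (n₁ ⊕ n₂) ℂ)
    (hBt : ∀ t : ℝ, 0 < t → (B t).PosSemidef)
    (hBinf : Binf.PosSemidef)
    (hlim : Tendsto B atTop (𝓝 Binf))
    (hpd : ∀ t : ℝ, 0 < t → (t • A + B t).PosDef)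
    (hABinf : (A + Binf).PosDef) :
    (Binf.toBlocks₂₂).PosDef ∧
    Tendsto (fun t : ℝ => (t • A + B t)⁻¹) atTop
      (𝓝 (Matrix.fromBlocks 0 0 0 (Binf.toBlocks₂₂)⁻¹)) := by
  subst hA
  have h22 : (Binf.toBlocks₂₂).PosDef := by
    have h := hABinf.submatrix (e := (Sum.inr : n₂ → n₁ ⊕ n₂)) Sum.inr_injective
    convert h using 1
    ext i j
    simp [Matrix.toBlocks₂₂]
  refine ⟨h22, ?_⟩
  have hN : Matrix.fromBlocks A₁₁ 0 0 0 + Binf * blockScale n₁ n₂ 0 =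
      Matrix.fromBlocks A₁₁ Binf.toBlocks₁₂ 0 Binf.toBlocks₂₂ := by
    conv_lhs => rw [← Matrix.fromBlocks_toBlocks Binf]
    simp [blockScale, Matrix.fromBlocks_multiply, Matrix.fromBlocks_add]
  have hD : Tendsto (fun t : ℝ => blockScale n₁ n₂ t⁻¹) atTop (𝓝 (blockScale n₁ n₂ 0)) :=
    ((continuous_blockScale n₁ n₂).tendsto 0).comp tendsto_inv_atTop_zero
  have hM : Tendsto (fun t : ℝ => Matrix.fromBlocks A₁₁ 0 0 0 + B t * blockScale n₁ n₂ t⁻¹) atTop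
      (𝓝 (Matrix.fromBlocks A₁₁ Binf.toBlocks₁₂ 0 Binf.toBlocks₂₂)) := by
    rw [← hN]
    exact tendsto_const_nhds.add (hlim.mul hD)
  have hdet : (Matrix.fromBlocks A₁₁ Binf.toBlocks₁₂ 0 Binf.toBlocks₂₂).det ≠ 0 := by
    rw [Matrix.det_fromBlocks_zero₂₁]
    exact mul_ne_zero hA₁₁.det_pos.ne' h22.det_pos.ne'
  have hcont : ContinuousAt Inv.inv
      (Matrix.fromBlocks A₁₁ Binf.toBlocks₁₂ 0 Binf.toBlocks₂₂) := by
    apply continuousAt_matrix_inv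
    rw [Ring.inverse_eq_inv']
    exact continuousAt_inv₀ hdet
  have hval : blockScale n₁ n₂ 0 *
      (Matrix.fromBlocks A₁₁ Binf.toBlocks₁₂ 0 Binf.toBlocks₂₂)⁻¹ =
      Matrix.fromBlocks 0 0 0 (Binf.toBlocks₂₂)⁻¹ := by
    rw [Matrix.inv_fromBlocks_zero₂₁_of_isUnit_iff _ _ _
      (iff_of_true hA₁₁.isUnit h22.isUnit)]
    simp [blockScale, Matrix.fromBlocks_multiply]
  rw [← hval]
  refine (hD.mul (hcont.tendsto.comp hM)).congr' ?_
  filter_upwards [eventually_ne_atTop 0] with t ht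
  exact (inv_eq_blockScale_mul A₁₁ (B t) ht).symm
end

section
/- Let A, B be positive semidefinite n-by-n complex Hermitian matrices and let N be an n-by-n complex matrix such that A + N*N is positive definite, where N* is the conjugate transpose. Define f(X) = A + N*(B + X⁻¹)⁻¹N for positive definite Hermitian X (note B + X⁻¹ is positive definite, hence invertible). Then: (i) f(X) is positive definite for every positive definite X; (ii) f is order-preserving for the Loewner order, i.e., if X, Y are positive definite and Y − X is positive semidefinite, then f(Y) − f(X) is positive semidefinite; (iii) f is subhomogeneous, i.e., for every t ≥ 1 and positive definite X, t·f(X) − f(tX) is positive semidefinite. -/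
open Matrix
open scoped ComplexOrder

/-!
All three claims reduce to antitonicity of inversion on positive definite matrices. With
`D = Q - P`, two applications of the resolvent identity give
`P⁻¹ - Q⁻¹ = Q⁻¹ D Q⁻¹ + (D Q⁻¹)ᴴ P⁻¹ (D Q⁻¹)`, a sum of congruences of positive semidefinite
matrices when `D ≥ 0`. Monotonicity of `f` is this fact used twice. Subhomogeneity is this fact
applied to `t⁻¹ (B + X⁻¹) ≤ B + t⁻¹ X⁻¹`. For definiteness of `f X`, a vector on which the form of
`A + Nᴴ C N` with `C > 0` vanishes is killed by `N` and by the form of `A`, hence by the form of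
`A + Nᴴ N`.
-/

lemma Matrix.PosDef.posSemidef_inv_sub_inv {n : Type*} [Fintype n] [DecidableEq n]
    {P Q : Matrix n n ℂ} (hP : P.PosDef) (hQ : Q.PosDef) (h : (Q - P).PosSemidef) :
    (P⁻¹ - Q⁻¹).PosSemidef := by
  have hPu : P⁻¹ * P = 1 := nonsing_inv_mul P (P.isUnit_iff_isUnit_det.1 hP.isUnit)
  have hPu' : P * P⁻¹ = 1 := mul_nonsing_inv P (P.isUnit_iff_isUnit_det.1 hP.isUnit)
  have hQu : Q⁻¹ * Q = 1 := nonsing_inv_mul Q (Q.isUnit_iff_isUnit_det.1 hQ.isUnit)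
  have hQu' : Q * Q⁻¹ = 1 := mul_nonsing_inv Q (Q.isUnit_iff_isUnit_det.1 hQ.isUnit)
  have e1 : P⁻¹ - Q⁻¹ = P⁻¹ * (Q - P) * Q⁻¹ := by
    rw [mul_sub, sub_mul, hPu, mul_assoc, hQu', mul_one, one_mul]
  have e2 : P⁻¹ = Q⁻¹ + Q⁻¹ * (Q - P) * P⁻¹ := by
    rw [mul_sub, sub_mul, hQu, mul_assoc, hPu', mul_one, one_mul]; abel
  have e3 : P⁻¹ - Q⁻¹ = (Q⁻¹)ᴴ * (Q - P) * Q⁻¹ + ((Q - P) * Q⁻¹)ᴴ * P⁻¹ * ((Q - P) * Q⁻¹) := by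
    rw [conjTranspose_mul, h.isHermitian.eq, hQ.inv.isHermitian.eq, e1]
    calc P⁻¹ * (Q - P) * Q⁻¹ = (Q⁻¹ + Q⁻¹ * (Q - P) * P⁻¹) * (Q - P) * Q⁻¹ := by rw [← e2]
      _ = _ := by simp only [add_mul, mul_assoc]
  rw [e3]
  exact (h.conjTranspose_mul_mul_same _).add (hP.inv.posSemidef.conjTranspose_mul_mul_same _)

lemma Matrix.PosSemidef.posDef_add_conj {n : Type*} [Fintype n] [DecidableEq n]
    {A N C : Matrix n n ℂ} (hA : A.PosSemidef) (hAN : (A + Nᴴ * N).PosDef) (hC : C.PosDef) :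
    (A + Nᴴ * C * N).PosDef := by
  have conj (M : Matrix n n ℂ) (x : n → ℂ) :
      star x ⬝ᵥ ((Nᴴ * M * N) *ᵥ x) = star (N *ᵥ x) ⬝ᵥ (M *ᵥ (N *ᵥ x)) := by
    rw [star_mulVec, ← dotProduct_mulVec, mulVec_mulVec, mulVec_mulVec, mul_assoc]
  have hS := hC.posSemidef.conjTranspose_mul_mul_same N
  refine PosDef.of_dotProduct_mulVec_pos (hA.add hS).isHermitian fun x hx => ?_
  rw [add_mulVec, dotProduct_add, conj]
  have hAx := hA.dotProduct_mulVec_nonneg x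
  by_cases hN : N *ᵥ x = 0
  · have := hAN.dotProduct_mulVec_pos hx
    rw [add_mulVec, ← mulVec_mulVec, hN, mulVec_zero, add_zero] at this
    simpa [hN] using this
  · exact add_pos_of_nonneg_of_pos hAx (hC.dotProduct_mulVec_pos hN)

/-- For positive semidefinite `A, B` and `N` with `A + Nᴴ * N` positive definite,
the map `f X = A + Nᴴ * (B + X⁻¹)⁻¹ * N` sends positive definite matrices to positive definite
matrices, is order-preserving for the Loewner order, and is subhomogeneous. -/
theorem stmt19 {n : Type*} [Fintype n] [DecidableEq n]
    {A B : Matrix n n ℂ} (hA : A.PosSemidef) (hB : B.PosSemidef)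
    {N : Matrix n n ℂ} (hAN : (A + Nᴴ * N).PosDef)
    (f : Matrix n n ℂ → Matrix n n ℂ)
    (hf : ∀ Xm : Matrix n n ℂ, f Xm = A + Nᴴ * (B + Xm⁻¹)⁻¹ * N) :
    (∀ Xm : Matrix n n ℂ, Xm.PosDef → (f Xm).PosDef) ∧
    (∀ Xm Ym : Matrix n n ℂ, Xm.PosDef → Ym.PosDef → (Ym - Xm).PosSemidef →
      (f Ym - f Xm).PosSemidef) ∧
    (∀ t : ℝ, 1 ≤ t → ∀ Xm : Matrix n n ℂ, Xm.PosDef →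
      (t • f Xm - f (t • Xm)).PosSemidef) := by
  have hBX {X : Matrix n n ℂ} (hX : X.PosDef) : (B + X⁻¹).PosDef :=
    PosDef.posSemidef_add hB hX.inv
  refine ⟨fun X hX => ?_, fun X Y hX hY h => ?_, fun t ht X hX => ?_⟩
  · rw [hf]
    exact hA.posDef_add_conj hAN (hBX hX).inv
  · have h1 : ((B + X⁻¹) - (B + Y⁻¹)).PosSemidef := by
      rw [add_sub_add_left_eq_sub]
      exact hX.posSemidef_inv_sub_inv hY h
    have h2 := (hBX hY).posSemidef_inv_sub_inv (hBX hX) h1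
    rw [hf, hf, add_sub_add_left_eq_sub, ← sub_mul, ← mul_sub]
    exact h2.conjTranspose_mul_mul_same N
  · have ht0 : 0 < t := by linarith
    have inv_smul' {s : ℝ} (hs : 0 < s) {M : Matrix n n ℂ} (hM : M.PosDef) :
        (s • M)⁻¹ = s⁻¹ • M⁻¹ := by
      apply inv_eq_right_inv
      rw [smul_mul_smul_comm, mul_inv_cancel₀ hs.ne',
        mul_nonsing_inv M (M.isUnit_iff_isUnit_det.1 hM.isUnit), one_smul]
    have hti : 0 < t⁻¹ := inv_pos.2 ht0
    have hD : ((B + (t • X)⁻¹) - t⁻¹ • (B + X⁻¹)).PosSemidef := by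
      have : (B + (t • X)⁻¹) - t⁻¹ • (B + X⁻¹) = (1 - t⁻¹) • B := by
        rw [inv_smul' ht0 hX]; module
      rw [this]
      exact hB.smul (sub_nonneg.2 (inv_le_one_of_one_le₀ ht))
    have h2 := ((hBX hX).smul hti).posSemidef_inv_sub_inv (hBX (hX.smul ht0)) hD
    rw [inv_smul' hti (hBX hX), inv_inv] at h2
    have e : t • f X - f (t • X) =
        (t - 1) • A + Nᴴ * (t • (B + X⁻¹)⁻¹ - (B + (t • X)⁻¹)⁻¹) * N := by
      rw [hf, hf, mul_sub, sub_mul, mul_smul_comm, smul_mul_assoc]; module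
    rw [e]
    exact (hA.smul (sub_nonneg.2 ht)).add (h2.conjTranspose_mul_mul_same N)
end
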